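/- Truth lemma for the canonical model: for every maximal SKH-consistent set Γ, every state Δ of S^c_Γ, and every formula φ of L_Kh, M^c_Γ, Δ ⊨ φ if and only if φ ∈ Δ. -/

import Mathlib

/-- Formulas of the language L_Kh. -/
inductive Formula (P : Type) : Type
  | top : Formula P
  | atom : P → Formula P
  | neg : Formula P → Formula P
  | and : Formula P → Formula P → Formula P
  | kh : Formula P → Formula P → Formula P

namespace Formula

/-- ⊥ abbreviates ¬⊤. -/
def bot {P : Type} : Formula P := neg top

/-- φ → ψ abbreviates ¬(φ ∧ ¬ψ). -/
def imp {P : Type} (φ ψ : Formula P) : Formula P := neg (φ.and ψ.neg)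

/-- φ ↔ ψ. -/
def iff_ {P : Type} (φ ψ : Formula P) : Formula P := (φ.imp ψ).and (ψ.imp φ)

/-- Uφ abbreviates Kh(¬φ, ⊥). -/
def U {P : Type} (φ : Formula P) : Formula P := kh (neg φ) bot

end Formula

/-- A model (ability map): a labelled transition system with a nonempty set
of states, transitions labelled by action symbols in `A`, and a valuation. -/
structure Model (P A : Type) where
  S : Type
  ne : Nonempty S
  R : A → S → S → Prop
  V : S → Set P

namespace Model

/-- `runs M σ s t` means s →σ t. -/
def runs {P A : Type} (M : Model P A) : List A → M.S → M.S → Prop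
  | [], s, t => s = t
  | a :: σ, s, t => ∃ u, M.R a s u ∧ M.runs σ u t

/-- σ = a₁…aₙ is strongly executable at s: for every k < n and every t
reached from s by the length-k prefix of σ, t has an a_{k+1}-successor. -/
def SE {P A : Type} (M : Model P A) (σ : List A) (s : M.S) : Prop :=
  ∀ (k : ℕ) (hk : k < σ.length) (t : M.S),
    M.runs (σ.take k) s t → ∃ u, M.R (σ.get ⟨k, hk⟩) t u

end Model

/-- Truth of a formula at a state of a model. -/
def Sat {P A : Type} (M : Model P A) : Formula P → M.S → Prop
  | .top, _ => True
  | .atom p, s => p ∈ M.V s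
  | .neg φ, s => ¬ Sat M φ s
  | .and φ ψ, s => Sat M φ s ∧ Sat M ψ s
  | .kh ψ φ, _ => ∃ σ : List A, ∀ s' : M.S, Sat M ψ s' →
      M.SE σ s' ∧ ∀ t : M.S, M.runs σ s' t → Sat M φ t

/-- Validity: truth at every state of every model (over a countable
nonempty set of action symbols). -/
def Valid {P : Type} (φ : Formula P) : Prop :=
  ∀ (A : Type) [Countable A] [Nonempty A] (M : Model P A) (s : M.S), Sat M φ s

/-- Boolean evaluation of a formula, treating atoms and Kh-formulas as
propositional variables (used to define instances of propositional tautologies). -/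
def evalB {P : Type} (v : Formula P → Bool) : Formula P → Bool
  | .top => true
  | .atom p => v (.atom p)
  | .neg φ => !(evalB v φ)
  | .and φ ψ => evalB v φ && evalB v ψ
  | .kh ψ φ => v (.kh ψ φ)

/-- Uniform substitution of formulas for proposition letters. -/
def subst {P : Type} (s : P → Formula P) : Formula P → Formula P
  | .top => .top
  | .atom p => s p
  | .neg φ => (subst s φ).neg
  | .and φ ψ => (subst s φ).and (subst s ψ)
  | .kh ψ φ => (subst s ψ).kh (subst s φ)

/-- The proof system SKH. -/
inductive Derivable {P : Type} : Formula P → Prop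
  /-- all instances of propositional tautologies -/
  | taut {φ : Formula P} : (∀ v : Formula P → Bool, evalB v φ = true) → Derivable φ
  /-- DISTU -/
  | distU (φ ψ : Formula P) : Derivable (((φ.U).and ((φ.imp ψ).U)).imp ψ.U)
  /-- COMPKh -/
  | compKh (φ ρ χ : Formula P) : Derivable (((φ.kh ρ).and (ρ.kh χ)).imp (φ.kh χ))
  /-- EMP -/
  | emp (φ χ : Formula P) : Derivable (((φ.imp χ).U).imp (φ.kh χ))
  /-- TU -/
  | tU (φ : Formula P) : Derivable ((φ.U).imp φ)
  /-- 4KU -/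
  | fourKU (φ χ : Formula P) : Derivable ((φ.kh χ).imp ((φ.kh χ).U))
  /-- 5KU -/
  | fiveKU (φ χ : Formula P) : Derivable (((φ.kh χ).neg).imp (((φ.kh χ).neg).U))
  /-- modus ponens -/
  | mp {φ ψ : Formula P} : Derivable (φ.imp ψ) → Derivable φ → Derivable ψ
  /-- NECU -/
  | necU {φ : Formula P} : Derivable φ → Derivable φ.U
  /-- SUB: uniform substitution -/
  | sub {φ : Formula P} (s : P → Formula P) : Derivable φ → Derivable (subst s φ)

/-- A set of formulas is SKH-consistent if no finite conjunction of its
members proves ⊥ in SKH. -/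
def Consistent {P : Type} (Γ : Set (Formula P)) : Prop :=
  ¬ ∃ l : List (Formula P), (∀ φ ∈ l, φ ∈ Γ) ∧
      Derivable ((l.foldr Formula.and Formula.top).imp Formula.bot)

/-- Maximal consistent set. -/
def MCS {P : Type} (Γ : Set (Formula P)) : Prop :=
  Consistent Γ ∧ ∀ Δ : Set (Formula P), Consistent Δ → Γ ⊆ Δ → Δ = Γ

/-- Δ|_Kh : the Kh-formulas in Δ. -/
def khPart {P : Type} (Δ : Set (Formula P)) : Set (Formula P) :=
  {χ | χ ∈ Δ ∧ ∃ ψ φ : Formula P, χ = ψ.kh φ}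

/-- The states S^c_Γ of the canonical model for Γ. -/
def canonStates {P : Type} (Γ : Set (Formula P)) : Set (Set (Formula P)) :=
  {Δ | MCS Δ ∧ khPart Δ = khPart Γ}

/-- The action symbols Σ_Γ of the canonical model: pairs ⟨ψ,φ⟩ with Kh(ψ,φ) ∈ Γ. -/
def SigmaGamma {P : Type} (Γ : Set (Formula P)) : Type :=
  {pr : Formula P × Formula P // (pr.1.kh pr.2) ∈ Γ}

/-- The canonical model M^c_Γ for a maximal consistent set Γ. -/
def canonicalModel {P : Type} (Γ : Set (Formula P)) (hΓ : MCS Γ) :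
    Model P (SigmaGamma Γ) where
  S := {Δ : Set (Formula P) // Δ ∈ canonStates Γ}
  ne := ⟨⟨Γ, hΓ, rfl⟩⟩
  R := fun a Δ Θ => a.val.1 ∈ Δ.val ∧ a.val.2 ∈ Θ.val
  V := fun Δ => {p | Formula.atom p ∈ Δ.val}

def conjL {P : Type} (l : List (Formula P)) : Formula P := l.foldr Formula.and Formula.top

theorem evalB_conjL {P : Type} (v : Formula P → Bool) (l : List (Formula P)) :
    evalB v (conjL l) = true ↔ ∀ φ ∈ l, evalB v φ = true := by
  induction l with
  | nil => simp [conjL, evalB]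
  | cons a l ih =>
    have : conjL (a :: l) = a.and (conjL l) := rfl
    simp [this, evalB, ih]

theorem evalB_imp {P : Type} (v : Formula P → Bool) (φ ψ : Formula P) :
    evalB v (φ.imp ψ) = true ↔ (evalB v φ = true → evalB v ψ = true) := by
  simp only [Formula.imp, evalB]
  cases evalB v φ <;> cases evalB v ψ <;> simp

theorem evalB_neg {P : Type} (v : Formula P → Bool) (φ : Formula P) :
    evalB v (φ.neg) = true ↔ ¬ evalB v φ = true := by
  simp [evalB]

theorem evalB_and {P : Type} (v : Formula P → Bool) (φ ψ : Formula P) :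
    evalB v (φ.and ψ) = true ↔ (evalB v φ = true ∧ evalB v ψ = true) := by
  simp [evalB]

theorem evalB_bot {P : Type} (v : Formula P → Bool) :
    evalB v (Formula.bot : Formula P) = true ↔ False := by
  simp [evalB, Formula.bot]

theorem der_conseq {P : Type} {φ ψ : Formula P} (h : Derivable φ)
    (hv : ∀ v : Formula P → Bool, evalB v φ = true → evalB v ψ = true) : Derivable ψ :=
  Derivable.mp (Derivable.taut (fun v => (evalB_imp v φ ψ).2 (hv v))) h

theorem incons_insert {P : Type} {S : Set (Formula P)} {φ : Formula P}
    (h : ¬ Consistent (insert φ S)) :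
    ∃ l : List (Formula P), (∀ χ ∈ l, χ ∈ S) ∧ Derivable ((conjL l).imp φ.neg) := by
  classical
  unfold Consistent at h
  rw [not_not] at h
  obtain ⟨l, hl, hd⟩ := h
  refine ⟨l.filter (fun χ => χ ≠ φ), ?_, ?_⟩
  · intro χ hχ
    simp only [List.mem_filter, decide_eq_true_eq] at hχ
    exact (hl χ hχ.1).resolve_left hχ.2
  · refine der_conseq hd ?_
    intro v hv
    have hv' := (evalB_imp v (conjL l) _).1 hv
    rw [evalB_imp, evalB_neg, evalB_conjL]
    intro h1 h2
    refine (evalB_bot v).1 (hv' ((evalB_conjL v l).2 ?_))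
    intro χ hχ
    by_cases he : χ = φ
    · rw [he]; exact h2
    · exact h1 χ (by simp [hχ, he])

theorem mcs_mem_or {P : Type} {S : Set (Formula P)} (hS : MCS S) (φ : Formula P)
    (h : φ ∉ S) : ∃ l : List (Formula P), (∀ χ ∈ l, χ ∈ S) ∧ Derivable ((conjL l).imp φ.neg) := by
  apply incons_insert
  intro hc
  exact h (hS.2 _ hc (Set.subset_insert _ _) ▸ Set.mem_insert _ _)

theorem mcs_closed {P : Type} {S : Set (Formula P)} (hS : MCS S) {φ : Formula P}
    (l : List (Formula P)) (hl : ∀ χ ∈ l, χ ∈ S) (hd : Derivable ((conjL l).imp φ)) : φ ∈ S := by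
  by_contra h
  obtain ⟨l', hl', hd'⟩ := mcs_mem_or hS φ h
  refine hS.1 ⟨l ++ l', ?_, ?_⟩
  · intro χ hχ
    rcases List.mem_append.1 hχ with h | h
    exacts [hl _ h, hl' _ h]
  · refine Derivable.mp (der_conseq hd ?_) hd'
    intro v hv
    change evalB v (Formula.imp _ (Formula.imp (conjL (l ++ l')) _)) = true
    rw [evalB_imp] at hv
    rw [evalB_imp, evalB_imp, evalB_imp, evalB_neg, evalB_bot]
    intro h1 h2
    rw [evalB_conjL] at *
    exact h1 (fun χ hχ => h2 χ (List.mem_append_right _ hχ))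
      (hv fun χ hχ => h2 χ (List.mem_append_left _ hχ))

theorem mcs_der {P : Type} {S : Set (Formula P)} (hS : MCS S) {φ : Formula P}
    (hd : Derivable φ) : φ ∈ S := by
  refine mcs_closed hS [] (by simp) (der_conseq hd ?_)
  intro v hv
  rw [evalB_imp]; exact fun _ => hv

theorem mcs_mp {P : Type} {S : Set (Formula P)} (hS : MCS S) {φ ψ : Formula P}
    (hd : φ.imp ψ ∈ S) (h : φ ∈ S) : ψ ∈ S := by
  refine mcs_closed hS [φ.imp ψ, φ] (by simp [hd, h]) (Derivable.taut ?_)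
  intro v
  rw [evalB_imp, evalB_conjL]
  intro h
  exact (evalB_imp v φ ψ).1 (h _ (by simp)) (h _ (by simp))

theorem mcs_neg {P : Type} {S : Set (Formula P)} (hS : MCS S) (φ : Formula P) :
    φ.neg ∈ S ↔ φ ∉ S := by
  constructor
  · intro h1 h2
    refine hS.1 ⟨[φ.neg, φ], by simp [h1, h2], Derivable.taut ?_⟩
    intro v
    change evalB v (Formula.imp (conjL _) _) = true
    rw [evalB_imp, evalB_conjL]
    intro h
    exact absurd (h φ (by simp)) ((evalB_neg v φ).1 (h _ (by simp)))
  · intro h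
    obtain ⟨l, hl, hd⟩ := mcs_mem_or hS φ h
    exact mcs_closed hS l hl hd

theorem mcs_and {P : Type} {S : Set (Formula P)} (hS : MCS S) (φ ψ : Formula P) :
    φ.and ψ ∈ S ↔ φ ∈ S ∧ ψ ∈ S := by
  constructor
  · intro h
    constructor
    all_goals
      refine mcs_mp hS (mcs_der hS (Derivable.taut ?_)) h
      intro v
      rw [evalB_imp, evalB_and]
      tauto
  · intro h
    refine mcs_closed hS [φ, ψ] (by simp [h]) (Derivable.taut ?_)
    intro v
    rw [evalB_imp, evalB_conjL, evalB_and]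
    intro h
    exact ⟨h _ (by simp), h _ (by simp)⟩

theorem mcs_imp {P : Type} {S : Set (Formula P)} (hS : MCS S) (φ ψ : Formula P) :
    φ.imp ψ ∈ S ↔ (φ ∈ S → ψ ∈ S) := by
  unfold Formula.imp
  rw [mcs_neg hS, mcs_and hS, mcs_neg hS]
  tauto

theorem mcs_Ump {P : Type} {S : Set (Formula P)} (hS : MCS S) {φ ψ : Formula P}
    (h : (φ.imp ψ).U ∈ S) (h' : φ.U ∈ S) : ψ.U ∈ S :=
  mcs_mp hS (mcs_der hS (Derivable.distU φ ψ)) ((mcs_and hS _ _).2 ⟨h', h⟩)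

theorem mcs_Uconj {P : Type} {S : Set (Formula P)} (hS : MCS S) (l : List (Formula P))
    (h : ∀ χ ∈ l, χ.U ∈ S) : (conjL l).U ∈ S := by
  induction l with
  | nil => exact mcs_der hS (Derivable.necU (Derivable.taut fun v => rfl))
  | cons a l ih =>
    have h1 : (a.imp ((conjL l).imp (a.and (conjL l)))).U ∈ S := by
      refine mcs_der hS (Derivable.necU (Derivable.taut fun v => ?_))
      rw [evalB_imp, evalB_imp, evalB_and]
      tauto
    exact mcs_Ump hS (mcs_Ump hS h1 (h a (by simp))) (ih fun χ hχ => h χ (by simp [hχ]))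

theorem list_chain {P : Type} {c : Set (Set (Formula P))} (hc : IsChain (· ⊆ ·) c)
    (hne : c.Nonempty) (l : List (Formula P)) (hl : ∀ χ ∈ l, χ ∈ ⋃₀ c) :
    ∃ T ∈ c, ∀ χ ∈ l, χ ∈ T := by
  induction l with
  | nil => obtain ⟨T, hT⟩ := hne; exact ⟨T, hT, by simp⟩
  | cons a l ih =>
    obtain ⟨T, hT, h⟩ := ih fun χ hχ => hl χ (by simp [hχ])
    obtain ⟨T', hT', h'⟩ := hl a (by simp)
    rcases hc.total hT hT' with hs | hs
    · refine ⟨T', hT', ?_⟩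
      intro χ hχ
      rcases List.mem_cons.1 hχ with rfl | hχ
      exacts [h', hs (h _ hχ)]
    · refine ⟨T, hT, ?_⟩
      intro χ hχ
      rcases List.mem_cons.1 hχ with rfl | hχ
      exacts [hs h', h _ hχ]

theorem lindenbaum {P : Type} {S : Set (Formula P)} (hS : Consistent S) :
    ∃ T, S ⊆ T ∧ MCS T := by
  obtain ⟨T, hST, hT⟩ := zorn_subset_nonempty {T : Set (Formula P) | Consistent T} (by
    intro c hcs hc hne
    refine ⟨⋃₀ c, ?_, fun s hs => Set.subset_sUnion_of_mem hs⟩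
    rintro ⟨l, hl, hd⟩
    obtain ⟨T, hT, h⟩ := list_chain hc hne l hl
    exact hcs hT ⟨l, h, hd⟩) S hS
  exact ⟨T, hST, hT.1, fun Θ hΘ h => Set.Subset.antisymm (hT.2 hΘ h) h⟩

theorem canon_kh {P : Type} {Γ Δ : Set (Formula P)} (hΔ : Δ ∈ canonStates Γ)
    (ψ φ : Formula P) : ψ.kh φ ∈ Δ ↔ ψ.kh φ ∈ Γ := by
  have h := Set.ext_iff.1 hΔ.2 (ψ.kh φ)
  simpa [khPart] using h

theorem canon_U {P : Type} {Γ : Set (Formula P)} (hΓ : MCS Γ) (φ : Formula P)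
    (h : ∀ Δ ∈ canonStates Γ, φ ∈ Δ) : φ.U ∈ Γ := by
  by_contra hU
  let X : Set (Formula P) := {χ | χ ∈ Γ ∧ ∃ a b : Formula P, χ = a.kh b ∨ χ = (a.kh b).neg}
  have hX : ∀ χ ∈ X, χ.U ∈ Γ := by
    rintro χ ⟨hχ, a, b, rfl | rfl⟩
    · exact mcs_mp hΓ (mcs_der hΓ (Derivable.fourKU a b)) hχ
    · exact mcs_mp hΓ (mcs_der hΓ (Derivable.fiveKU a b)) hχ
  have hcon : Consistent (insert φ.neg X) := by
    by_contra hc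
    obtain ⟨l, hl, hd⟩ := incons_insert hc
    refine hU (mcs_Ump hΓ (mcs_der hΓ (Derivable.necU (der_conseq hd ?_)))
      (mcs_Uconj hΓ l fun χ hχ => hX χ (hl χ hχ)))
    intro v
    rw [evalB_imp, evalB_imp, evalB_neg, evalB_neg]
    tauto
  obtain ⟨T, hXT, hT⟩ := lindenbaum hcon
  have hTs : T ∈ canonStates Γ := by
    refine ⟨hT, ?_⟩
    ext χ
    constructor
    · rintro ⟨h1, a, b, rfl⟩
      refine ⟨?_, a, b, rfl⟩
      by_contra hn
      exact (mcs_neg hT _).1 (hXT (Set.mem_insert_of_mem _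
        ⟨(mcs_neg hΓ _).2 hn, a, b, Or.inr rfl⟩)) h1
    · rintro ⟨h1, a, b, rfl⟩
      exact ⟨hXT (Set.mem_insert_of_mem _ ⟨h1, a, b, Or.inl rfl⟩), a, b, rfl⟩
  exact (mcs_neg hT φ).1 (hXT (Set.mem_insert _ _)) (h T hTs)

theorem canon_emp {P : Type} {Γ : Set (Formula P)} (hΓ : MCS Γ) (ψ φ : Formula P)
    (h : ∀ Δ ∈ canonStates Γ, ψ ∈ Δ → φ ∈ Δ) : ψ.kh φ ∈ Γ :=
  mcs_mp hΓ (mcs_der hΓ (Derivable.emp ψ φ))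
    (canon_U hΓ _ fun Δ hΔ => (mcs_imp hΔ.1 _ _).2 (h Δ hΔ))

theorem canon_comp {P : Type} {Γ : Set (Formula P)} (hΓ : MCS Γ) {ψ χ φ : Formula P}
    (h : ψ.kh χ ∈ Γ) (h' : χ.kh φ ∈ Γ) : ψ.kh φ ∈ Γ :=
  mcs_mp hΓ (mcs_der hΓ (Derivable.compKh ψ χ φ)) ((mcs_and hΓ _ _).2 ⟨h, h'⟩)

theorem canon_exists {P : Type} {Γ : Set (Formula P)} (hΓ : MCS Γ) {ψ φ : Formula P}
    (h : ψ.kh φ ∈ Γ) (Δ : Set (Formula P)) (hΔ : Δ ∈ canonStates Γ) (hψ : ψ ∈ Δ) :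
    ∃ Θ ∈ canonStates Γ, φ ∈ Θ := by
  by_contra hn
  push Not at hn
  have h1 : φ.kh Formula.bot ∈ Γ := canon_emp hΓ _ _ fun Θ hΘ hφ => absurd hφ (hn Θ hΘ)
  have h2 : ψ.neg.neg.kh ψ ∈ Γ := canon_emp hΓ _ _ fun Θ hΘ hφ => by
    rw [mcs_neg hΘ.1, mcs_neg hΘ.1, not_not] at hφ
    exact hφ
  have h3 : ψ.neg.U ∈ Γ := canon_comp hΓ h2 (canon_comp hΓ h h1)
  have h4 : ψ.neg.U ∈ Δ := (canon_kh hΔ _ _).2 h3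
  exact (mcs_neg hΔ.1 ψ).1 (mcs_mp hΔ.1 (mcs_der hΔ.1 (Derivable.tU _)) h4) hψ

theorem canon_plan {P : Type} {Γ : Set (Formula P)} (hΓ : MCS Γ) (φ : Formula P)
    (σ : List (SigmaGamma Γ)) : ∀ ψ : Formula P,
    (∀ s : (canonicalModel Γ hΓ).S, ψ ∈ s.val → (canonicalModel Γ hΓ).SE σ s ∧
      ∀ t : (canonicalModel Γ hΓ).S, (canonicalModel Γ hΓ).runs σ s t → φ ∈ t.val) →
    ψ.kh φ ∈ Γ := by
  induction σ with
  | nil =>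
    intro ψ h
    exact canon_emp hΓ _ _ fun Δ hΔ hψ => (h ⟨Δ, hΔ⟩ hψ).2 _ rfl
  | cons a σ ih =>
    intro ψ h
    by_cases hne : ∃ s : (canonicalModel Γ hΓ).S, ψ ∈ s.val
    · obtain ⟨s, hs⟩ := hne
      have hα : ∀ s : (canonicalModel Γ hΓ).S, ψ ∈ s.val → a.val.1 ∈ s.val := by
        intro s hs
        obtain ⟨u, hu⟩ := (h s hs).1 0 (by simp) s rfl
        exact hu.1
      refine canon_comp hΓ (canon_emp hΓ _ _ fun Δ hΔ hψ => hα ⟨Δ, hΔ⟩ hψ)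
        (canon_comp hΓ a.property (ih _ ?_))
      intro t ht
      have hR : (canonicalModel Γ hΓ).R a s t := ⟨hα s hs, ht⟩
      refine ⟨?_, fun u hu => (h s hs).2 u ⟨t, hR, hu⟩⟩
      intro k hk u hu
      exact (h s hs).1 (k + 1) (by simpa using hk) u ⟨t, hR, hu⟩
    · exact canon_emp hΓ _ _ fun Δ hΔ hψ => absurd ⟨⟨Δ, hΔ⟩, hψ⟩ hne

/-- truth lemma for the canonical model: for every maximal
SKH-consistent set Γ, every state Δ of S^c_Γ, and every formula φ,
M^c_Γ, Δ ⊨ φ iff φ ∈ Δ. -/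
theorem truth_lemma {P : Type} (Γ : Set (Formula P)) (hΓ : MCS Γ)
    (Δ : Set (Formula P)) (hΔ : Δ ∈ canonStates Γ) (φ : Formula P) :
    Sat (canonicalModel Γ hΓ) φ ⟨Δ, hΔ⟩ ↔ φ ∈ Δ := by
  induction φ generalizing Δ with
  | top => exact ⟨fun _ => mcs_der hΔ.1 (Derivable.taut fun v => rfl), fun _ => trivial⟩
  | atom p => exact Iff.rfl
  | neg φ ih =>
    rw [mcs_neg hΔ.1, ← ih Δ hΔ]
    exact Iff.rfl
  | and φ ψ ih1 ih2 =>
    rw [mcs_and hΔ.1, ← ih1 Δ hΔ, ← ih2 Δ hΔ]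
    exact Iff.rfl
  | kh ψ φ ih1 ih2 =>
    rw [canon_kh hΔ]
    constructor
    · rintro ⟨σ, hσ⟩
      refine canon_plan hΓ φ σ ψ fun s hs => ?_
      obtain ⟨h1, h2⟩ := hσ s ((ih1 s.1 s.2).2 hs)
      exact ⟨h1, fun t ht => (ih2 t.1 t.2).1 (h2 t ht)⟩
    · intro h
      refine ⟨[⟨(ψ, φ), h⟩], fun s hs => ?_⟩
      have hs' : ψ ∈ s.val := (ih1 s.1 s.2).1 hs
      constructor
      · intro k hk t ht
        have hk0 : k = 0 := Nat.lt_one_iff.1 hk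
        subst hk0
        have ht' : s = t := ht
        subst ht'
        obtain ⟨Θ, hΘ, hφ⟩ := canon_exists hΓ h s.1 s.2 hs'
        exact ⟨⟨Θ, hΘ⟩, hs', hφ⟩
      · rintro t ⟨u, hu, rfl⟩
        exact (ih2 u.1 u.2).2 hu.2
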